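/- arXiv:0801.0080 — 2 statements merged into one kernel-verified Lean document; each statement's English description precedes it below -/
import Mathlib

section
/- Let A₁,…,Aₙ be finite subsets of a field F with 0 < |A₁| < |A₂| < ⋯ < |Aₙ|. Then |{ x₁ + ⋯ + xₙ : xᵢ ∈ Aᵢ for all i, and xᵢ ≠ x_j whenever i ≠ j }| ≥ min{ p(F), 1 + Σ_{i=1}^n (|Aᵢ| − i) }. -/
/-!
The argument is the polynomial method of Alon, Nathanson and Ruzsa. If the sums `x₁ + ⋯ + xₙ` of
distinct `xᵢ ∈ Aᵢ` all lay in a set `S` with at most `M` elements, then for a monic univariate `g`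
of degree `M` vanishing on `S` the polynomial `∏_{i<j} (Xⱼ - Xᵢ) * g(X₁ + ⋯ + Xₙ)` would vanish on
`A₁ × ⋯ × Aₙ`. The Combinatorial Nullstellensatz forbids this as soon as a top-degree monomial
`∏ Xᵢ ^ cᵢ` with `cᵢ < |Aᵢ|` has a nonzero coefficient. That coefficient is the integer
`M! * ∏_{i<j} (cⱼ - cᵢ) / ∏ cᵢ!`; for strictly increasing `c` the product `∏_{i<j} (cⱼ - cᵢ)`
divides `∏ cᵢ!`, so the coefficient divides `M!`, which is nonzero in the field for `M < p(F)`.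
-/

open Finset MvPolynomial
open scoped Nat

section RestrictedSumset

variable {ι M : Type*} [Fintype ι] [AddCommMonoid M]

/-- The restricted sumset of the family `A`: all sums `∑ i, x i` of tuples with `x i ∈ A i` that
satisfy the side condition `P`. Sums of pairwise distinct elements are the case
`P = Function.Injective`. -/
def restrictedSumset (A : ι → Finset M) (P : (ι → M) → Prop) : Set M :=
  {y | ∃ x : ι → M, (∀ i, x i ∈ A i) ∧ P x ∧ ∑ i, x i = y}

lemma finite_restrictedSumset (A : ι → Finset M) (P : (ι → M) → Prop) :
    (restrictedSumset A P).Finite := by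
  refine ((Set.Finite.pi' fun i => (A i).finite_toSet).image fun x => ∑ i, x i).subset ?_
  rintro _ ⟨x, hxA, -, rfl⟩
  exact ⟨x, hxA, rfl⟩

end RestrictedSumset

section PolynomialMethod

section CommSemiring

variable {R σ : Type*} [CommSemiring R]

lemma totalDegree_aeval_le (s : MvPolynomial σ R) (g : Polynomial R) :
    (Polynomial.aeval s g).totalDegree ≤ g.natDegree * s.totalDegree := by
  rw [Polynomial.aeval_eq_sum_range]
  refine totalDegree_finsetSum_le fun k hk => ?_
  calc (g.coeff k • s ^ k).totalDegree
      ≤ (s ^ k).totalDegree := totalDegree_smul_le _ _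
    _ ≤ k * s.totalDegree := totalDegree_pow _ _
    _ ≤ g.natDegree * s.totalDegree := by gcongr; exact mem_range_succ_iff.mp hk

lemma coeff_mul_aeval_of_monic {h s : MvPolynomial σ R} {g : Polynomial R} {c : σ →₀ ℕ}
    (hg : g.Monic) (hs : s.totalDegree ≤ 1) (hc : h.totalDegree + g.natDegree ≤ c.degree) :
    coeff c (h * Polynomial.aeval s g) = coeff c (h * s ^ g.natDegree) := by
  have lower_coeff_eq_zero (k) (hk : k ∈ range g.natDegree) : coeff c (h * s ^ k) = 0 := by
    refine coeff_eq_zero_of_totalDegree_lt ?_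
    calc (h * s ^ k).totalDegree
        ≤ h.totalDegree + (s ^ k).totalDegree := totalDegree_mul _ _
      _ ≤ h.totalDegree + k * 1 := by grw [totalDegree_pow, hs]
      _ < h.totalDegree + g.natDegree := by simpa using hk
      _ ≤ c.degree := hc
  conv_lhs => rw [hg.as_sum]
  simp only [map_add, map_pow, map_sum, map_mul, Polynomial.aeval_X, Polynomial.aeval_C,
    algebraMap_eq, mul_add, mul_sum, coeff_add, coeff_sum, mul_left_comm h (C _), coeff_C_mul]
  rw [sum_eq_zero fun k hk => by rw [lower_coeff_eq_zero k hk, mul_zero], add_zero]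

end CommSemiring

variable {R σ : Type*} [CommRing R]

lemma exists_monic_natDegree_eq_eval_eq_zero [Nontrivial R] {S : Finset R} {m : ℕ} (hS : #S ≤ m) :
    ∃ g : Polynomial R, g.Monic ∧ g.natDegree = m ∧ ∀ a ∈ S, g.eval a = 0 := by
  have hprod : (∏ a ∈ S, (Polynomial.X - Polynomial.C a)).Monic :=
    Polynomial.monic_prod_X_sub_C id S
  refine ⟨Polynomial.X ^ (m - #S) * ∏ a ∈ S, (Polynomial.X - Polynomial.C a),
    (Polynomial.monic_X_pow _).mul hprod, ?_, fun a ha => ?_⟩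
  · rw [(Polynomial.monic_X_pow _).natDegree_mul hprod, Polynomial.natDegree_X_pow,
      Polynomial.natDegree_finsetProd_X_sub_C_eq_card S fun a => a, Nat.sub_add_cancel hS]
  · rw [Polynomial.eval_mul, Polynomial.eval_prod, prod_eq_zero ha (by simp), mul_zero]

theorem lt_ncard_restrictedSumset_of_coeff_ne_zero [IsDomain R] [Fintype σ] {A : σ → Finset R}
    {h : MvPolynomial σ R} {m : ℕ} {c : σ →₀ ℕ} (hcA : ∀ i, c i < #(A i))
    (hdeg : h.totalDegree + m ≤ c.degree) (hcoeff : coeff c (h * (∑ i, X i) ^ m) ≠ 0) :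
    m < (restrictedSumset A fun x => eval x h ≠ 0).ncard := by
  have hfin := finite_restrictedSumset A fun x => eval x h ≠ 0
  by_contra! hcard
  rw [Set.ncard_eq_toFinset_card _ hfin] at hcard
  obtain ⟨g, hg, rfl, hgS⟩ := exists_monic_natDegree_eq_eval_eq_zero hcard
  set s : MvPolynomial σ R := ∑ i, X i with hs
  have hs_deg : s.totalDegree ≤ 1 := totalDegree_finsetSum_le fun i _ => (totalDegree_X i).le
  have hf_coeff : coeff c (h * Polynomial.aeval s g) ≠ 0 := by
    rwa [coeff_mul_aeval_of_monic hg hs_deg hdeg]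
  have hf_deg : (h * Polynomial.aeval s g).totalDegree = c.degree := by
    refine le_antisymm ?_ (le_totalDegree (mem_support_iff.mpr hf_coeff))
    grw [totalDegree_mul, totalDegree_aeval_le, hs_deg, mul_one, hdeg]
  obtain ⟨x, hxA, hx⟩ := combinatorial_nullstellensatz_exists_eval_nonzero _ c hf_coeff hf_deg A hcA
  rw [map_mul] at hx
  have hsum_mem : ∑ i, x i ∈ restrictedSumset A fun x => eval x h ≠ 0 :=
    ⟨x, hxA, left_ne_zero_of_mul hx, rfl⟩
  have heval : eval x (Polynomial.aeval s g) = g.eval (∑ i, x i) := by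
    have hcomp : (eval x).comp C = RingHom.id R := by ext; simp
    simp [hs, Polynomial.aeval_def, Polynomial.hom_eval₂, hcomp, Polynomial.eval₂_id]
  exact right_ne_zero_of_mul hx (heval.trans (hgS _ (hfin.mem_toFinset.mpr hsum_mem)))

end PolynomialMethod

section Vandermonde

lemma det_vandermonde_eq_prod_Iio {R : Type*} [CommRing R] {n : ℕ} (v : Fin n → R) :
    (Matrix.vandermonde v).det = ∏ j, ∏ i ∈ Iio j, (v j - v i) := by
  rw [Matrix.det_vandermonde]
  exact prod_comm' (by simp)

lemma prod_sub_dvd_factorial {s : Finset ℕ} {b : ℕ} (hs : s ⊆ range b) :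
    ∏ a ∈ s, (b - a) ∣ b ! := by
  rw [← Nat.descFactorial_self, Nat.descFactorial_eq_prod_range]
  exact prod_dvd_prod_of_subset _ _ _ hs

lemma det_vandermonde_dvd_prod_factorial {n : ℕ} {c : Fin n → ℕ} (hc : StrictMono c) :
    (Matrix.vandermonde fun i => (c i : ℤ)).det ∣ ∏ i, ((c i)! : ℤ) := by
  rw [det_vandermonde_eq_prod_Iio]
  refine prod_dvd_prod_of_dvd _ _ fun j _ => ?_
  have hlt (i) (hi : i ∈ Iio j) : c i < c j := hc (mem_Iio.mp hi)
  have hcast : ∏ i ∈ Iio j, ((c j : ℤ) - c i) = ((∏ a ∈ (Iio j).image c, (c j - a) : ℕ) : ℤ) := by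
    rw [prod_image hc.injective.injOn, Nat.cast_prod]
    exact prod_congr rfl fun i hi => (Nat.cast_sub (hlt i hi).le).symm
  rw [hcast]
  exact Int.natCast_dvd_natCast.mpr (prod_sub_dvd_factorial (by simpa [image_subset_iff] using hlt))

/-- The Vandermonde polynomial `∏_{i<j} (Xⱼ - Xᵢ)`, whose nonzeros over a domain are the points
with pairwise distinct coordinates. It is encoded as a determinant so that the coefficients of its
multiples can be expanded over permutations. -/
noncomputable def vandermondePolynomial (n : ℕ) (R : Type*) [CommRing R] : MvPolynomial (Fin n) R :=
  (Matrix.vandermonde X).det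

namespace vandermondePolynomial

variable {R S : Type*} [CommRing R] [CommRing S] {n : ℕ}

lemma eval_eq_det (x : Fin n → R) :
    eval x (vandermondePolynomial n R) = (Matrix.vandermonde x).det := by
  simp [vandermondePolynomial, Matrix.det_vandermonde]

lemma eval_ne_zero_iff [IsDomain R] (x : Fin n → R) :
    eval x (vandermondePolynomial n R) ≠ 0 ↔ Function.Injective x := by
  rw [eval_eq_det, Matrix.det_vandermonde_ne_zero_iff]

lemma map_eq (f : R →+* S) :
    MvPolynomial.map f (vandermondePolynomial n R) = vandermondePolynomial n S := by
  simp [vandermondePolynomial, Matrix.det_vandermonde]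

lemma totalDegree_le : (vandermondePolynomial n R).totalDegree ≤ ∑ i : Fin n, (i : ℕ) := by
  rw [vandermondePolynomial, det_vandermonde_eq_prod_Iio]
  have hsub (i j : Fin n) : (X j - X i : MvPolynomial (Fin n) R).totalDegree ≤ 1 :=
    ((isHomogeneous_X R j).sub (isHomogeneous_X R i)).totalDegree_le
  calc _ ≤ ∑ j, (∏ i ∈ Iio j, (X j - X i : MvPolynomial (Fin n) R)).totalDegree :=
        totalDegree_finsetProd _ _
    _ ≤ ∑ j : Fin n, ∑ i ∈ Iio j, 1 := by
        gcongr with j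
        exact (totalDegree_finsetProd _ _).trans (sum_le_sum fun i _ => hsub i j)
    _ = ∑ j : Fin n, (j : ℕ) := by simp

end vandermondePolynomial

end Vandermonde

section Coefficients

lemma coeff_sum_X_pow_mul_prod_factorial {R σ : Type*} [CommSemiring R] [Fintype σ]
    (d : σ →₀ ℕ) :
    coeff d ((∑ i, X i : MvPolynomial σ R) ^ d.degree) * ∏ i, ((d i)! : R) = d.degree ! := by
  have hdegree : (d.sum fun _ k => k) = d.degree := rfl
  rw [coeff_sum_X_pow_of_fintype, if_pos hdegree,
    Finsupp.multinomial_eq_of_support_subset (subset_univ _), Finsupp.degree_eq_sum,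
    ← Nat.multinomial_spec univ d]
  push_cast
  ring

lemma coeff_monomial_mul_sum_X_pow_mul_prod_factorial {R σ : Type*} [CommSemiring R] [Fintype σ]
    {M : ℕ} {c e : σ →₀ ℕ} (hdeg : c.degree = M + e.degree) :
    coeff c (monomial e 1 * (∑ i, X i : MvPolynomial σ R) ^ M) * ∏ i, ((c i)! : R) =
      M ! * ∏ i, ((c i).descFactorial (e i) : R) := by
  classical
  rw [coeff_monomial_mul']
  split_ifs with hec
  · obtain ⟨d, rfl⟩ := exists_add_of_le hec
    obtain rfl : d.degree = M := by rw [map_add] at hdeg; omega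
    rw [one_mul, add_tsub_cancel_left, ← coeff_sum_X_pow_mul_prod_factorial, mul_assoc,
      ← prod_mul_distrib]
    congr! 2 with i
    rw [← Nat.factorial_mul_descFactorial (hec i)]
    simp
  · obtain ⟨i, hi⟩ : ∃ i, c i < e i := by simpa [Finsupp.le_def] using hec
    rw [zero_mul, prod_eq_zero (mem_univ i) (by simp [Nat.descFactorial_of_lt hi]), mul_zero]

theorem coeff_vandermondePolynomial_mul_sum_X_pow_mul_prod_factorial {R : Type*} [CommRing R]
    [IsDomain R] {n M : ℕ} {c : Fin n →₀ ℕ} (hdeg : c.degree = M + ∑ i : Fin n, (i : ℕ)) :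
    coeff c (vandermondePolynomial n R * (∑ i, X i) ^ M) * ∏ i, ((c i)! : R) =
      M ! * (Matrix.vandermonde fun i => (c i : R)).det := by
  have hterm (τ : Equiv.Perm (Fin n)) :
      coeff c ((∏ i, X i ^ (τ i : ℕ)) * (∑ i, X i : MvPolynomial (Fin n) R) ^ M) *
        ∏ i, ((c i)! : R) = M ! * ∏ i, ((c i).descFactorial (τ i) : R) := by
    let e : Fin n →₀ ℕ := Finsupp.equivFunOnFinite.symm fun i => (τ i : ℕ)
    have he : c.degree = M + e.degree := by
      rw [hdeg, Finsupp.degree_eq_sum, ← Equiv.sum_comp τ]; rfl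
    have hmonomial : ∏ i, X i ^ (τ i : ℕ) = monomial e (1 : R) := by
      rw [monomial_eq, Finsupp.prod_fintype _ _ (by simp)]
      simp [e]
    rw [hmonomial, coeff_monomial_mul_sum_X_pow_mul_prod_factorial he]
    rfl
  -- Falling factorials are monic, so they may replace the powers in the Vandermonde determinant.
  rw [Matrix.det_eval_matrixOfPolynomials_eq_det_vandermonde (fun i => (c i : R))
      (fun j => descPochhammer R j) (fun j => descPochhammer_natDegree R j)
      (fun j => monic_descPochhammer R j), vandermondePolynomial, ← Matrix.det_transpose,
    Matrix.det_apply, ← Matrix.det_transpose (Matrix.of _), Matrix.det_apply]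
  simp only [sum_mul, mul_sum, coeff_sum, Matrix.transpose_apply, Matrix.vandermonde_apply,
    Matrix.of_apply, descPochhammer_eval_eq_descFactorial, smul_mul_assoc, mul_smul_comm,
    Units.smul_def, coeff_smul, hterm]

lemma coeff_vandermondePolynomial_mul_sum_X_pow_dvd_factorial_int {n M : ℕ} {c : Fin n →₀ ℕ}
    (hc : StrictMono c) (hdeg : c.degree = M + ∑ i : Fin n, (i : ℕ)) :
    coeff c (vandermondePolynomial n ℤ * (∑ i, X i) ^ M) ∣ (M ! : ℤ) := by
  obtain ⟨q, hq⟩ := det_vandermonde_dvd_prod_factorial hc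
  have hdet : (Matrix.vandermonde fun i => (c i : ℤ)).det ≠ 0 :=
    Matrix.det_vandermonde_ne_zero_iff.mpr (Nat.cast_injective.comp hc.injective)
  have hcoeff := coeff_vandermondePolynomial_mul_sum_X_pow_mul_prod_factorial (R := ℤ) hdeg
  refine ⟨q, mul_right_cancel₀ hdet ?_⟩
  rw [← hcoeff, hq]
  ring

-- The quotient `M! / coeff` is computed over `ℤ`: in `R` the factorials of the `c i` may vanish.
theorem coeff_vandermondePolynomial_mul_sum_X_pow_dvd_factorial (R : Type*) [CommRing R] {n M : ℕ}
    {c : Fin n →₀ ℕ} (hc : StrictMono c) (hdeg : c.degree = M + ∑ i : Fin n, (i : ℕ)) :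
    coeff c (vandermondePolynomial n R * (∑ i, X i) ^ M) ∣ (M ! : R) := by
  have hmap := map_dvd (Int.castRingHom R)
    (coeff_vandermondePolynomial_mul_sum_X_pow_dvd_factorial_int hc hdeg)
  rw [← coeff_map] at hmap
  simpa [vandermondePolynomial.map_eq] using hmap

end Coefficients

section StrictMono

variable {n : ℕ} {c : Fin n → ℕ}

lemma val_le_of_strictMono (hc : StrictMono c) (i : Fin n) : (i : ℕ) ≤ c i := by
  simpa using card_le_card_of_injOn (s := Iio i) (t := range (c i)) c
    (fun j hj => by simpa using hc (by simpa using hj)) hc.injective.injOn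

lemma exists_strictMono_le_sum_add_one_eq (hc : StrictMono c)
    (hlt : ∑ i : Fin n, (i : ℕ) < ∑ i, c i) :
    ∃ c' : Fin n → ℕ, StrictMono c' ∧ c' ≤ c ∧ ∑ i, c' i + 1 = ∑ i, c i := by
  -- The least `i` with `i < c i` can be decreased by one, because `c j = j` for all `j < i`.
  obtain ⟨k, -, hk⟩ := exists_lt_of_sum_lt hlt
  obtain ⟨i, hi, hmin⟩ := WellFounded.has_min (wellFounded_lt (α := Fin n))
    {i | (i : ℕ) < c i} ⟨k, hk⟩
  have hbelow (j) (hji : j < i) : c j < c i - 1 := by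
    have : ¬ (j : ℕ) < c j := fun h => hmin j h hji
    have : (i : ℕ) < c i := hi
    omega
  have hpos : 0 < c i := (Nat.zero_le _).trans_lt hi
  refine ⟨Function.update c i (c i - 1), fun a b hab => ?_,
    update_le_self_iff.mpr (Nat.sub_le _ _), ?_⟩
  · have hcab := hc hab
    have hbelow_a := hbelow a
    grind [Function.update_apply]
  · rw [sum_update_of_mem (mem_univ i), sdiff_singleton_eq_erase,
      ← add_sum_erase univ c (mem_univ i)]
    omega

lemma exists_strictMono_le_sum_eq (hc : StrictMono c) {N : ℕ} (hN : ∑ i : Fin n, (i : ℕ) ≤ N)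
    (hNc : N ≤ ∑ i, c i) : ∃ c' : Fin n → ℕ, StrictMono c' ∧ c' ≤ c ∧ ∑ i, c' i = N := by
  obtain ⟨d, hd⟩ := Nat.exists_eq_add_of_le hNc
  induction d generalizing c with
  | zero => exact ⟨c, hc, le_rfl, hd⟩
  | succ d ih =>
    obtain ⟨c₁, hc₁, hle₁, hsum₁⟩ := exists_strictMono_le_sum_add_one_eq hc (by omega)
    obtain ⟨c₂, hc₂, hle₂, hsum₂⟩ := ih hc₁ (by omega) (by omega)
    exact ⟨c₂, hc₂, hle₂.trans hle₁, hsum₂⟩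

end StrictMono

section DistinctSums

lemma min_ringChar_le_of_forall_factorial_ne_zero {R : Type*} [NonAssocRing R]
    [NoZeroDivisors R] [Nontrivial R] {m N : ℕ} (h : ∀ M ≤ m, (M ! : R) ≠ 0 → M < N) :
    min (if ringChar R = 0 then (⊤ : ℕ∞) else (ringChar R : ℕ∞)) ((1 + m : ℕ)) ≤ (N : ℕ∞) := by
  rcases CharP.char_is_prime_or_zero R (ringChar R) with hp | h0
  · have hfactorial : ((min (ringChar R - 1) m)! : R) ≠ 0 := by
      rw [Ne, ringChar.spec, hp.dvd_factorial]
      have := hp.pos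
      omega
    have hlt := h _ (min_le_right _ _) hfactorial
    rw [if_neg hp.ne_zero, min_le_iff, Nat.cast_le, Nat.cast_le]
    omega
  · have : CharZero R := (CharP.ringChar_zero_iff_CharZero R).mp h0
    have hlt := h m le_rfl (Nat.cast_ne_zero.mpr m.factorial_ne_zero)
    rw [if_pos h0, min_eq_right le_top, Nat.cast_le]
    omega

variable {R : Type*} [CommRing R] [IsDomain R]

theorem lt_ncard_restrictedSumset_injective {n M : ℕ} {A : Fin n → Finset R} {c : Fin n → ℕ}
    (hc : StrictMono c) (hcA : ∀ i, c i < #(A i)) (hsum : ∑ i, c i = M + ∑ i : Fin n, (i : ℕ))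
    (hM : (M ! : R) ≠ 0) : M < (restrictedSumset A Function.Injective).ncard := by
  let t : Fin n →₀ ℕ := Finsupp.equivFunOnFinite.symm c
  have ht : t.degree = M + ∑ i : Fin n, (i : ℕ) := by rw [Finsupp.degree_eq_sum, ← hsum]; rfl
  have hcoeff : coeff t (vandermondePolynomial n R * (∑ i, X i) ^ M) ≠ 0 :=
    ne_zero_of_dvd_ne_zero hM (coeff_vandermondePolynomial_mul_sum_X_pow_dvd_factorial R hc ht)
  have hdeg : (vandermondePolynomial n R).totalDegree + M ≤ t.degree := by
    grw [ht, vandermondePolynomial.totalDegree_le, add_comm]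
  simpa only [vandermondePolynomial.eval_ne_zero_iff] using
    lt_ncard_restrictedSumset_of_coeff_ne_zero hcA hdeg hcoeff

theorem lt_ncard_restrictedSumset_injective_of_strictMono_card {n M : ℕ} {A : Fin n → Finset R}
    (hA : ∀ i, 0 < #(A i)) (hmono : StrictMono fun i => #(A i))
    (hMA : M ≤ ∑ i : Fin n, (#(A i) - (i.1 + 1))) (hM : (M ! : R) ≠ 0) :
    M < (restrictedSumset A Function.Injective).ncard := by
  have hpred : StrictMono fun i => #(A i) - 1 := fun i j hij =>
    Nat.sub_lt_sub_right (hA i) (hmono hij)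
  have hsum : ∑ i, (#(A i) - 1) = ∑ i : Fin n, (#(A i) - (i.1 + 1)) + ∑ i : Fin n, (i : ℕ) := by
    rw [← sum_add_distrib]
    refine sum_congr rfl fun i _ => ?_
    have := val_le_of_strictMono hpred i
    omega
  obtain ⟨c, hc, hcA, hcsum⟩ := exists_strictMono_le_sum_eq hpred (Nat.le_add_left _ M) (by omega)
  exact lt_ncard_restrictedSumset_injective hc (fun i => (hcA i).trans_lt (Nat.pred_lt (hA i).ne'))
    hcsum hM

theorem stmt_7_general {n : ℕ} {A : Fin n → Finset R} (hA : ∀ i, 0 < #(A i))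
    (hmono : StrictMono fun i => #(A i)) :
    min (if ringChar R = 0 then (⊤ : ℕ∞) else (ringChar R : ℕ∞))
        ((1 + ∑ i : Fin n, (#(A i) - (i.1 + 1)) : ℕ)) ≤
      ((restrictedSumset A Function.Injective).ncard : ℕ∞) :=
  min_ringChar_le_of_forall_factorial_ne_zero fun _ =>
    lt_ncard_restrictedSumset_injective_of_strictMono_card hA hmono

end DistinctSums

theorem stmt_7 {F : Type*} [Field F] (n : ℕ) (hn : 1 ≤ n)
    (A : Fin n → Finset F) (h0 : ∀ i : Fin n, 0 < (A i).card)
    (hmono : ∀ i j : Fin n, i < j → (A i).card < (A j).card) :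
    min (if ringChar F = 0 then (⊤ : ℕ∞) else (ringChar F : ℕ∞))
        ((1 + ∑ i : Fin n, ((A i).card - (i.1 + 1)) : ℕ)) ≤
      ({y : F | ∃ x : Fin n → F, (∀ i, x i ∈ A i) ∧ Function.Injective x ∧
          (∑ i, x i) = y}.ncard : ℕ∞) := by
  exact stmt_7_general h0 hmono
end

section
/- Let F be a field of prime characteristic p or characteristic 0, let n ≥ 2, k ∈ {1,…,n}, and suppose f(x₁,…,xₙ) = x₁^k + ⋯ + xₙ^k + g(x₁,…,xₙ) with deg g < k. For any finite subset A of F with |A| = m ≥ n such that k | n or k | (m − n), we have |{ f(x₁,…,xₙ) : x₁,…,xₙ ∈ A pairwise distinct }| ≥ min{ p(F), n(m−n)/k + 1 }. -/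
open MvPolynomial

/-!
Suppose that the set `Y` of values of `f` has `T` elements, with `T` less than the bound. The
product of `∏ c ∈ Y, (f - C c)` and the Vandermonde determinant of the variables vanishes at every
point with coordinates in `A`, so by the Combinatorial Nullstellensatz its coefficients of top
degree at exponents `e i < #A` are zero. In top degree `f` may be replaced by the power sum, and up
to factorials the coefficient is then `T !` times the determinant of the matrix with entries
`(e i / k).descFactorial (j / k)` for `e i` and `j` congruent modulo `k`, and `0` otherwise. A
vector in the kernel of this matrix would give, in each residue class, a combination of falling
factorial polynomials with more roots than its degree, provided that `e` meets the class often
enough. Suitable exponents are written down by shifting `0, …, n' - 1` in two steps, for some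
`n' ≤ n` depending on `T`; the other `n - n'` variables are first fixed at points of `A`.
-/

section

open Finset Function
open scoped Nat

theorem natCast_injOn_Iic_of_factorial_ne_zero {R : Type*} [NonAssocRing R] {T : ℕ}
    (hT : (T ! : R) ≠ 0) : Set.InjOn (Nat.cast : ℕ → R) (Set.Iic T) := by
  intro a ha b hb hab
  wlog hlt : a < b generalizing a b
  · by_contra hne
    exact hne (this hb ha hab.symm (by omega)).symm
  refine absurd ?_ hT
  have hdvd : b - a ∣ T ! := Nat.dvd_factorial (by omega) ((Nat.sub_le b a).trans hb)
  have hsub : ((b - a : ℕ) : R) = 0 := by rw [Nat.cast_sub hlt.le, hab, sub_self]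
  obtain ⟨c, hc⟩ := hdvd
  rw [hc, Nat.cast_mul, hsub, zero_mul]

/-- The entry of `residueMatrix` in a row with exponent `a` and a column with exponent `b`: the
falling factorial of the quotients of `a` and `b` by `k` if their residues agree, and `0` if not. -/
def residueDescFactorial (k a b : ℕ) : ℕ :=
  if a % k = b % k then (a / k).descFactorial (b / k) else 0

theorem factorial_mul_residueDescFactorial {k : ℕ} (hk : 0 < k) (b c : ℕ) :
    c ! * residueDescFactorial k (b + k * c) b = ((b + k * c) / k)! := by
  rw [residueDescFactorial, if_pos (Nat.add_mul_mod_self_left b k c), Nat.add_mul_div_left b c hk]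
  simpa using Nat.factorial_mul_descFactorial (Nat.le_add_right (b / k) c)

theorem exists_eq_add_mul_of_residueDescFactorial_ne_zero {k a b : ℕ}
    (h : residueDescFactorial k a b ≠ 0) : ∃ c, a = b + k * c := by
  obtain ⟨hmod, hdesc⟩ := ite_ne_right_iff.mp h
  obtain ⟨c, hc⟩ := Nat.exists_eq_add_of_le
    (not_lt.mp (mt Nat.descFactorial_eq_zero_iff_lt.mpr hdesc))
  refine ⟨c, ?_⟩
  rw [← Nat.div_add_mod a k, ← Nat.div_add_mod b k, hmod, hc]
  ring

section Coefficients

variable {σ R : Type*} [Fintype σ] [CommSemiring R] {k : ℕ}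

theorem expand_sum_X : expand k (∑ i, X i) = psum σ R k := by
  simp [psum]

theorem coeff_psum_pow_of_not_dvd {d : σ →₀ ℕ} {i : σ} (hi : ¬k ∣ d i) (T : ℕ) :
    coeff d (psum σ R k ^ T) = 0 := by
  rw [← expand_sum_X, ← map_pow, coeff_expand_of_not_dvd _ hi]

theorem prod_factorial_mul_coeff_psum_pow (hk : k ≠ 0) (c : σ →₀ ℕ) :
    (∏ i, ((c i)! : R)) * coeff (k • c) (psum σ R k ^ c.degree) = (c.degree ! : R) := by
  have hspec : (∏ i, (c i)!) * c.multinomial = c.degree ! := by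
    rw [Finsupp.multinomial_eq_of_support_subset (subset_univ _), Nat.multinomial_spec,
      Finsupp.degree_eq_sum]
  rw [← expand_sum_X, ← map_pow, coeff_expand_smul k hk, coeff_sum_X_pow_of_fintype,
    if_pos (by rfl), ← hspec]
  push_cast
  rfl

theorem prod_factorial_mul_coeff_psum_pow_mul_monomial (hk : 0 < k) {T : ℕ} {e b : σ →₀ ℕ}
    (heb : e.degree = b.degree + k * T) :
    (∏ i, ((e i / k)! : R)) * coeff e (psum σ R k ^ T * monomial b 1) =
      T ! * ∏ i, (residueDescFactorial k (e i) (b i) : R) := by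
  by_cases hc : ∃ c : σ →₀ ℕ, e = k • c + b
  · obtain ⟨c, rfl⟩ := hc
    have hT : c.degree = T := by
      simp only [map_add, map_nsmul, smul_eq_mul] at heb
      exact Nat.eq_of_mul_eq_mul_left hk (by omega)
    have hentry (i : σ) : (((k • c + b) i / k)! : R) =
        (c i)! * residueDescFactorial k ((k • c + b) i) (b i) := by
      simp [add_comm (k * c i), ← factorial_mul_residueDescFactorial hk]
    rw [coeff_mul_monomial, mul_one, prod_congr rfl fun i _ ↦ hentry i, prod_mul_distrib,
      mul_right_comm, ← hT, prod_factorial_mul_coeff_psum_pow hk.ne']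
  · have hentry : ∃ i, residueDescFactorial k (e i) (b i) = 0 := by
      contrapose! hc
      choose c hc using fun i ↦ exists_eq_add_mul_of_residueDescFactorial_ne_zero (hc i)
      exact ⟨Finsupp.equivFunOnFinite.symm c, Finsupp.ext fun i ↦ by simp [hc i, add_comm]⟩
    have hcoeff : coeff e (psum σ R k ^ T * monomial b 1) = 0 := by
      rw [coeff_mul_monomial', ite_eq_right_iff]
      intro hbe
      have hdvd : ∃ i, ¬k ∣ (e - b) i := by
        contrapose! hc
        choose c hc using hc
        refine ⟨Finsupp.equivFunOnFinite.symm c, ?_⟩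
        rw [← tsub_add_cancel_of_le hbe]
        exact Finsupp.ext fun i ↦ congrArg (· + b i) (hc i)
      obtain ⟨i, hi⟩ := hdvd
      rw [coeff_psum_pow_of_not_dvd hi, zero_mul]
    obtain ⟨i, hi⟩ := hentry
    rw [hcoeff, mul_zero, prod_eq_zero (mem_univ i) (by rw [hi, Nat.cast_zero]), mul_zero]

end Coefficients

section Vandermonde

variable {R : Type*} [CommRing R] {n : ℕ}

theorem isHomogeneous_det_vandermonde_X :
    (Matrix.vandermonde (X : Fin n → MvPolynomial (Fin n) R)).det.IsHomogeneous
      (∑ i : Fin n, (i : ℕ)) := by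
  rw [Matrix.det_apply']
  refine IsHomogeneous.sum _ _ _ fun τ _ ↦ ?_
  rw [← map_intCast (C : R →+* MvPolynomial (Fin n) R)]
  exact (IsHomogeneous.prod _ _ _ fun i _ ↦ isHomogeneous_X_pow (τ i) i).C_mul _

theorem det_vandermonde_X_eq_sum :
    (Matrix.vandermonde (X : Fin n → MvPolynomial (Fin n) R)).det =
      ∑ τ : Equiv.Perm (Fin n), C ((Equiv.Perm.sign τ : ℤ) : R) *
        monomial (Finsupp.equivFunOnFinite.symm fun i ↦ (τ i : ℕ)) 1 := by
  rw [← Matrix.det_transpose, Matrix.det_apply']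
  refine sum_congr rfl fun τ _ ↦ ?_
  simp [monomial_eq, Finsupp.prod_fintype, Matrix.vandermonde_apply]

theorem eval_det_vandermonde_X (x : Fin n → R) :
    eval x (Matrix.vandermonde X).det = (Matrix.vandermonde x).det := by
  rw [RingHom.map_det]
  congr 1
  ext i j
  simp [Matrix.vandermonde_apply]

/-- The matrix whose determinant gives, up to factorials, the coefficient of the monomial with
exponents `e` in the product of a power of the `k`-th power sum and the Vandermonde determinant. -/
def residueMatrix (R : Type*) [CommRing R] (k : ℕ) (e : Fin n → ℕ) : Matrix (Fin n) (Fin n) R :=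
  Matrix.of fun i j ↦ (residueDescFactorial k (e i) j : R)

theorem prod_factorial_mul_coeff_psum_pow_mul_det_vandermonde {k T : ℕ} (hk : 0 < k)
    {e : Fin n → ℕ} (he : ∑ i, e i = ∑ i : Fin n, (i : ℕ) + k * T) :
    (∏ i, ((e i / k)! : R)) * coeff (Finsupp.equivFunOnFinite.symm e)
        (psum (Fin n) R k ^ T * (Matrix.vandermonde X).det) =
      T ! * (residueMatrix R k e).det := by
  have hdeg (τ : Equiv.Perm (Fin n)) : (Finsupp.equivFunOnFinite.symm e).degree =
      (Finsupp.equivFunOnFinite.symm fun i ↦ (τ i : ℕ)).degree + k * T := by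
    simp [Finsupp.degree_eq_sum, he, Equiv.sum_comp τ fun i ↦ (i : ℕ)]
  rw [det_vandermonde_X_eq_sum, ← Matrix.det_transpose, Matrix.det_apply', mul_sum, coeff_sum,
    mul_sum, mul_sum]
  refine sum_congr rfl fun τ _ ↦ ?_
  have hterm := prod_factorial_mul_coeff_psum_pow_mul_monomial (R := R) hk (hdeg τ)
  simp only [Finsupp.equivFunOnFinite_symm_apply_apply] at hterm
  rw [mul_left_comm, coeff_C_mul, mul_left_comm, hterm, mul_left_comm]
  rfl

end Vandermonde

section Nonvanishing

variable {R : Type*} [CommRing R] [IsDomain R] {n k : ℕ} {e : Fin n → ℕ}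

theorem linearIndependent_descPochhammer : LinearIndependent R (descPochhammer R) :=
  Polynomial.Sequence.linearIndependent
    { elems' := descPochhammer R
      degree_eq' := fun d ↦ by
        rw [Polynomial.degree_eq_natDegree (monic_descPochhammer R d).ne_zero,
          descPochhammer_natDegree] }

theorem det_residueMatrix_ne_zero
    (hcard : ∀ j : Fin n, (j : ℕ) / k < #{i | e i % k = j % k})
    (hinj : ∀ i i', e i % k = e i' % k → ((e i / k : ℕ) : R) = (e i' / k : ℕ) → i = i') :
    (residueMatrix R k e).det ≠ 0 := by
  intro hdet
  obtain ⟨v, hv, hker⟩ := Matrix.exists_mulVec_eq_zero_iff.mpr hdet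
  refine hv (funext fun j₀ ↦ ?_)
  let S : Finset (Fin n) := {j | (j : ℕ) % k = j₀ % k}
  let P : Polynomial R := ∑ j ∈ S, v j • descPochhammer R (j / k)
  have hroot (i : Fin n) (hi : e i % k = j₀ % k) : P.eval ((e i / k : ℕ) : R) = 0 := by
    refine Eq.trans ?_ (congrFun hker i)
    rw [Polynomial.eval_finsetSum, Matrix.mulVec, dotProduct, sum_filter]
    refine sum_congr rfl fun j _ ↦ ?_
    simp [residueMatrix, residueDescFactorial, hi, eq_comm (a := (j₀ : ℕ) % k),
      descPochhammer_eval_eq_descFactorial, mul_comm (v j)]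
  have hdeg : P.natDegree < #{i | e i % k = j₀ % k} := by
    refine (Polynomial.natDegree_sum_le_of_forall_le _ _
      (n := #{i | e i % k = j₀ % k} - 1) fun j hj ↦ ?_).trans_lt
        (Nat.sub_one_lt (Nat.zero_lt_of_lt (hcard j₀)).ne')
    refine (Polynomial.natDegree_smul_le _ _).trans ?_
    rw [descPochhammer_natDegree, ← (mem_filter.mp hj).2]
    exact Nat.le_sub_one_of_lt (hcard j)
  have hP : P = 0 := by
    refine Polynomial.eq_zero_of_natDegree_lt_card_of_eval_eq_zero P
      (f := fun i : {i // e i % k = j₀ % k} ↦ ((e i / k : ℕ) : R)) ?_ (fun i ↦ hroot i i.2) ?_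
    · exact fun i i' h ↦ Subtype.ext (hinj i i' (i.2.trans i'.2.symm) h)
    · rwa [Fintype.card_subtype]
  have hdiv : Set.InjOn (fun j : Fin n ↦ (j : ℕ) / k) S := by
    intro j hj j' hj' h
    have hmod : (j : ℕ) % k = j' % k := (mem_filter.mp hj).2.trans (mem_filter.mp hj').2.symm
    exact Fin.ext (Nat.ext_div_mod h hmod)
  have hindep : LinearIndepOn R (fun j : Fin n ↦ descPochhammer R (j / k)) S :=
    linearIndependent_descPochhammer.comp (fun j : S ↦ (j : ℕ) / k) hdiv.injective
  exact linearIndepOn_finset_iff.mp hindep v hP j₀ (mem_filter.mpr ⟨mem_univ _, rfl⟩)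

end Nonvanishing

section Exponents

/-- Exponents `e` to which the coefficient argument applies with the `T`-th power of the `k`-th
power sum. On an abacus with `k` runners, the beads `0, …, n - 1` are moved a total of `T` places
along their runners. The field `div_lt_card` says that no runner ends up with fewer beads than it
had, and `le_mul` makes the rows `e i / k` at most `T`, so that distinct rows remain distinct in a
ring in which `T !` is nonzero. -/
structure IsAdmissible {n : ℕ} (k T : ℕ) (e : Fin n → ℕ) : Prop where
  sum_eq : ∑ i, e i = ∑ i : Fin n, (i : ℕ) + k * T
  injective : Injective e
  le_mul : ∀ i, e i ≤ k * T
  div_lt_card : ∀ j : Fin n, (j : ℕ) / k < #{i | e i % k = j % k}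

/-- The `i`-th exponent when the first `w` exponents are shifted by `a`, all others by `b`. -/
def stepExponent (w a b i : ℕ) : ℕ :=
  i + if i < w then a else b

theorem strictMono_stepExponent {w a b : ℕ} (hab : a ≤ b) : StrictMono (stepExponent w a b) := by
  intro i j hij
  simp only [stepExponent]
  split_ifs <;> omega

theorem stepExponent_le_add {w a b : ℕ} (hab : a ≤ b) (i : ℕ) : stepExponent w a b i ≤ i + b := by
  simp only [stepExponent]
  split_ifs <;> omega

theorem sum_stepExponent (w a b q : ℕ) :
    ∑ i : Fin (w * (q + 1)), stepExponent w a b i =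
      ∑ i : Fin (w * (q + 1)), (i : ℕ) + w * (b * q + a) := by
  have hshift : ∑ i : Fin (w * (q + 1)), (if (i : ℕ) < w then a else b) = w * (b * q + a) := by
    rw [Fin.sum_univ_eq_sum_range fun i ↦ if i < w then a else b, Nat.mul_succ, add_comm,
      sum_range_add, sum_congr rfl fun i hi ↦ if_pos (mem_range.mp hi)]
    simp only [Nat.not_lt.mpr (Nat.le_add_right w _), if_false, sum_const, card_range, smul_eq_mul]
    ring
  rw [← hshift, ← sum_add_distrib]
  rfl

theorem stepExponent_le_mul {w a b q i : ℕ} (ha : 0 < a) (hb : 0 < b) (hi : i < w * (q + 1)) :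
    stepExponent w a b i ≤ w * (b * q + a) := by
  obtain ⟨a, rfl⟩ := Nat.exists_eq_add_of_lt ha
  obtain ⟨b, rfl⟩ := Nat.exists_eq_add_of_lt hb
  have hw : 1 ≤ w := Nat.pos_of_mul_pos_right (Nat.zero_lt_of_lt hi)
  simp only [stepExponent]
  split_ifs with hiw
  · nlinarith [Nat.zero_le (w * (b * q)), Nat.zero_le (w * q), Nat.mul_le_mul_right a hw]
  · have hq : 1 ≤ q := by
      by_contra! hq
      rw [Nat.lt_one_iff.mp hq] at hi
      omega
    nlinarith [Nat.mul_le_mul_right b (Nat.mul_le_mul hw hq)]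

theorem lt_card_of_forall_exists_div_eq {n k m : ℕ} {S : Finset (Fin n)}
    (h : ∀ t ≤ m, ∃ i ∈ S, (i : ℕ) / k = t) : m < #S := by
  have hsub : range (m + 1) ⊆ S.image fun i : Fin n ↦ (i : ℕ) / k := by
    intro t ht
    obtain ⟨i, hi, rfl⟩ := h t (Nat.lt_succ_iff.mp (mem_range.mp ht))
    exact mem_image_of_mem _ hi
  simpa using (card_le_card hsub).trans card_image_le

theorem div_lt_card_of_mod_eq {n k : ℕ} (hk : 0 < k) {e : Fin n → ℕ}
    (he : ∀ i, e i % k = i % k) (j : Fin n) :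
    (j : ℕ) / k < #{i | e i % k = j % k} := by
  refine lt_card_of_forall_exists_div_eq (k := k) fun t ht ↦ ?_
  have hle : k * t + j % k ≤ j := by
    have := Nat.mul_le_mul_left k ht
    have := Nat.div_add_mod j k
    omega
  refine ⟨⟨k * t + j % k, hle.trans_lt j.isLt⟩, ?_, ?_⟩
  · simp [he]
  · simp [Nat.mul_add_div hk]

theorem div_lt_card_of_eq_add_div {N k : ℕ} (hk : 0 < k) {e : Fin (k * N) → ℕ} (c : ℕ → ℕ)
    (he : ∀ i, e i = i + c (i / k)) (j : Fin (k * N)) :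
    (j : ℕ) / k < #{i | e i % k = j % k} := by
  refine lt_card_of_forall_exists_div_eq (k := k) fun t ht ↦ ?_
  have htN : t < N := ht.trans_lt (Nat.div_lt_of_lt_mul j.isLt)
  obtain ⟨r, hrk, hr⟩ : ∃ r < k, (r + c t) % k = j % k := by
    refine ⟨(j + (k - 1) * c t) % k, Nat.mod_lt _ hk, ?_⟩
    rw [Nat.mod_add_mod, add_assoc, ← Nat.succ_mul, Nat.succ_eq_add_one, Nat.sub_add_cancel hk,
      Nat.add_mul_mod_self_left]
  have hdiv : (k * t + r) / k = t := by rw [Nat.mul_add_div hk, Nat.div_eq_of_lt hrk, add_zero]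
  refine ⟨⟨k * t + r, ?_⟩, ?_, hdiv⟩
  · exact (Nat.add_lt_add_left hrk _).trans_le (Nat.mul_le_mul_left k htN)
  · simp [he, hdiv, add_assoc, hr]

theorem isAdmissible_stepExponent {k T w a b q : ℕ} (hk : 0 < k) (ha : 0 < a) (hab : a ≤ b)
    (hT : k * T = w * (b * q + a)) (hmod : w = k ∨ k ∣ a ∧ k ∣ b) :
    IsAdmissible k T fun i : Fin (w * (q + 1)) ↦ stepExponent w a b i where
  sum_eq := by rw [hT, sum_stepExponent]
  injective := (strictMono_stepExponent hab).injective.comp Fin.val_injective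
  le_mul i := hT ▸ stepExponent_le_mul ha (ha.trans_le hab) i.isLt
  div_lt_card := by
    rcases hmod with rfl | ⟨hka, hkb⟩
    · refine div_lt_card_of_eq_add_div hk (fun t ↦ if t = 0 then a else b) fun i ↦ ?_
      simp only [stepExponent, Nat.div_eq_zero_iff, hk.ne', false_or]
    · refine div_lt_card_of_mod_eq hk fun i ↦ ?_
      have hshift : k ∣ if (i : ℕ) < w then a else b := by split_ifs <;> assumption
      rw [stepExponent, Nat.add_mod, Nat.mod_eq_zero_of_dvd hshift, add_zero, Nat.mod_mod]

theorem exists_eq_mul_add {N D T : ℕ} (hT : 0 < T) (h : T ≤ N * D) :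
    ∃ q < N, ∃ s, 0 < s ∧ s ≤ D ∧ T = D * q + s := by
  have hD : 0 < D := Nat.pos_of_mul_pos_left (hT.trans_le h)
  refine ⟨(T - 1) / D, ?_, (T - 1) % D + 1, Nat.succ_pos _, Nat.mod_lt _ hD, ?_⟩
  · rw [Nat.div_lt_iff_lt_mul hD]
    omega
  · have := Nat.div_add_mod (T - 1) D
    omega

theorem exists_isAdmissible {n d k T : ℕ} (hk : 0 < k) (hdvd : k ∣ n ∨ k ∣ d)
    (hT : T ≤ n * d / k) :
    ∃ n' ≤ n, ∃ e : Fin n' → ℕ, IsAdmissible k T e ∧ ∀ i, e i < n' + d := by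
  rcases T.eq_zero_or_pos with rfl | hTpos
  · exact ⟨0, Nat.zero_le n, Fin.elim0, ⟨by simp, fun i ↦ i.elim0, fun i ↦ i.elim0,
      fun i ↦ i.elim0⟩, fun i ↦ i.elim0⟩
  suffices h : ∃ w a b q, w * (q + 1) ≤ n ∧ 0 < a ∧ a ≤ b ∧ b ≤ d ∧
      k * T = w * (b * q + a) ∧ (w = k ∨ k ∣ a ∧ k ∣ b) by
    obtain ⟨w, a, b, q, hn, ha, hab, hbd, hkT, hmod⟩ := h
    refine ⟨_, hn, _, isAdmissible_stepExponent hk ha hab hkT hmod, fun i ↦ ?_⟩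
    exact (stepExponent_le_add hab i).trans_lt (add_lt_add_of_lt_of_le i.isLt hbd)
  rcases hdvd with ⟨N, rfl⟩ | ⟨D, rfl⟩
  · rw [mul_assoc, Nat.mul_div_cancel_left _ hk] at hT
    obtain ⟨q, hq, s, hs, hsd, rfl⟩ := exists_eq_mul_add hTpos hT
    exact ⟨k, s, d, q, Nat.mul_le_mul_left k hq, hs, hsd, le_rfl, rfl, .inl rfl⟩
  · rw [mul_left_comm, Nat.mul_div_cancel_left _ hk] at hT
    obtain ⟨q, hq, s, hs, hsD, rfl⟩ := exists_eq_mul_add hTpos hT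
    refine ⟨1, k * s, k * D, q, by omega, Nat.mul_pos hk hs, Nat.mul_le_mul_left k hsD, le_rfl,
      by ring, .inr ⟨dvd_mul_right k s, dvd_mul_right k D⟩⟩

end Exponents

section LeadingForm

variable {ι σ R : Type*} [CommSemiring R]

theorem totalDegree_psum_le [Fintype σ] (k : ℕ) : (psum σ R k).totalDegree ≤ k :=
  (IsHomogeneous.sum _ _ k fun i _ ↦ isHomogeneous_X_pow i k).totalDegree_le

theorem totalDegree_prod_add_le {k : ℕ} {s : Finset ι} {p : MvPolynomial σ R}
    {h : ι → MvPolynomial σ R} (hp : p.totalDegree ≤ k) (hh : ∀ i ∈ s, (h i).totalDegree ≤ k) :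
    (∏ i ∈ s, (p + h i)).totalDegree ≤ k * #s := by
  have hadd : ∀ i ∈ s, (p + h i).totalDegree ≤ k := fun i hi ↦
    (totalDegree_add _ _).trans (max_le hp (hh i hi))
  exact (totalDegree_finsetProd s _).trans
    ((sum_le_card_nsmul s _ k hadd).trans_eq (mul_comm _ _))

theorem coeff_prod_add_mul {k : ℕ} {s : Finset ι} {p : MvPolynomial σ R} {h : ι → MvPolynomial σ R}
    {d : σ →₀ ℕ} (hp : p.totalDegree ≤ k) (hh : ∀ i ∈ s, (h i).totalDegree < k)
    {q : MvPolynomial σ R} (hd : k * #s + q.totalDegree ≤ d.degree) :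
    coeff d ((∏ i ∈ s, (p + h i)) * q) = coeff d (p ^ #s * q) := by
  classical
  induction s using Finset.induction generalizing q with
  | empty => simp
  | insert a s ha ih =>
    rw [forall_mem_insert] at hh
    rw [card_insert_of_notMem ha, Nat.mul_succ] at hd
    have hlead : coeff d ((∏ i ∈ s, (p + h i)) * (p * q)) = coeff d (p ^ #s * (p * q)) := by
      refine ih hh.2 ?_
      have := totalDegree_mul p q
      omega
    have hlower : coeff d ((∏ i ∈ s, (p + h i)) * (h a * q)) = 0 := by
      apply coeff_eq_zero_of_totalDegree_lt
      have hprod : (∏ i ∈ s, (p + h i)).totalDegree ≤ k * #s :=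
        totalDegree_prod_add_le hp fun i hi ↦ (hh.2 i hi).le
      have := totalDegree_mul (∏ i ∈ s, (p + h i)) (h a * q)
      have := totalDegree_mul (h a) q
      rw [← Finsupp.degree_apply]
      omega
    calc coeff d ((∏ i ∈ insert a s, (p + h i)) * q)
        = coeff d ((∏ i ∈ s, (p + h i)) * (p * q) + (∏ i ∈ s, (p + h i)) * (h a * q)) := by
          rw [prod_insert ha]
          ring_nf
      _ = coeff d (p ^ #s * (p * q)) := by rw [coeff_add, hlead, hlower, add_zero]
      _ = coeff d (p ^ #(insert a s) * q) := by
          rw [card_insert_of_notMem ha, pow_succ, mul_assoc]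

end LeadingForm

section Nullstellensatz

variable {R : Type*} [CommRing R] [IsDomain R] {n k : ℕ}

theorem coeff_psum_pow_mul_det_vandermonde_ne_zero {T : ℕ} {e : Fin n → ℕ} (hk : 0 < k)
    (he : IsAdmissible k T e) (hT : (T ! : R) ≠ 0) :
    coeff (Finsupp.equivFunOnFinite.symm e) (psum (Fin n) R k ^ T * (Matrix.vandermonde X).det) ≠
      0 := by
  have hdet : (residueMatrix R k e).det ≠ 0 := by
    refine det_residueMatrix_ne_zero he.div_lt_card fun i i' hmod hdiv ↦ he.injective ?_
    have hquot (i : Fin n) : e i / k ∈ Set.Iic T := Nat.div_le_of_le_mul (he.le_mul i)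
    exact Nat.ext_div_mod (natCast_injOn_Iic_of_factorial_ne_zero hT (hquot i) (hquot i') hdiv) hmod
  refine right_ne_zero_of_mul (a := ∏ i, ((e i / k)! : R)) ?_
  rw [prod_factorial_mul_coeff_psum_pow_mul_det_vandermonde hk he.sum_eq]
  exact mul_ne_zero hT hdet

theorem exists_injective_eval_notMem_of_isAdmissible {A Y : Finset R} {e : Fin n → ℕ}
    (he : IsAdmissible k #Y e) (heA : ∀ i, e i < #A) (hfact : ((#Y)! : R) ≠ 0)
    {g : MvPolynomial (Fin n) R} (hg : g.totalDegree < k) :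
    ∃ x : Fin n → R, (∀ i, x i ∈ A) ∧ Injective x ∧ eval x (psum (Fin n) R k + g) ∉ Y := by
  let V : MvPolynomial (Fin n) R := (Matrix.vandermonde X).det
  let P : MvPolynomial (Fin n) R := (∏ c ∈ Y, (psum (Fin n) R k + (g - C c))) * V
  let E : Fin n →₀ ℕ := Finsupp.equivFunOnFinite.symm e
  have hsub (c : R) : (g - C c).totalDegree < k := (totalDegree_sub_C_le g c).trans_lt hg
  have hV : V.totalDegree ≤ ∑ i : Fin n, (i : ℕ) := isHomogeneous_det_vandermonde_X.totalDegree_le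
  have hE : E.degree = ∑ i : Fin n, (i : ℕ) + k * #Y := by
    simp [E, Finsupp.degree_eq_sum, he.sum_eq]
  have hcoeff : coeff E P ≠ 0 := by
    rw [coeff_prod_add_mul (totalDegree_psum_le k) (fun c _ ↦ hsub c) (by omega)]
    exact coeff_psum_pow_mul_det_vandermonde_ne_zero (pos_of_gt hg) he hfact
  have hdeg : P.totalDegree = E.degree := by
    refine le_antisymm ?_ (le_totalDegree (mem_support_iff.mpr hcoeff))
    have hprod : (∏ c ∈ Y, (psum (Fin n) R k + (g - C c))).totalDegree ≤ k * #Y :=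
      totalDegree_prod_add_le (totalDegree_psum_le k) fun c _ ↦ (hsub c).le
    exact (totalDegree_mul _ V).trans (hE ▸ (add_comm _ _).trans_le (add_le_add hV hprod))
  obtain ⟨x, hxA, hx⟩ :=
    combinatorial_nullstellensatz_exists_eval_nonzero P E hcoeff hdeg (fun _ ↦ A) heA
  rw [map_mul, eval_det_vandermonde_X, mul_ne_zero_iff, Matrix.det_vandermonde_ne_zero_iff,
    map_prod, prod_ne_zero_iff] at hx
  refine ⟨x, hxA, hx.2, fun hmem ↦ hx.1 _ hmem ?_⟩
  simp

end Nullstellensatz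

section Specialization

theorem totalDegree_aeval_le_s18 {σ τ R : Type*} [CommSemiring R] {d : ℕ} {f : σ → MvPolynomial τ R}
    (hf : ∀ i, (f i).totalDegree ≤ d) (p : MvPolynomial σ R) :
    (aeval f p).totalDegree ≤ p.totalDegree * d := by
  rw [aeval_def, eval₂_eq]
  refine totalDegree_finsetSum_le fun m hm ↦ ?_
  calc (C (coeff m p) * ∏ i ∈ m.support, f i ^ m i).totalDegree
      ≤ ∑ i ∈ m.support, (f i ^ m i).totalDegree :=
        (totalDegree_mul _ _).trans (by simpa using totalDegree_finsetProd _ _)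
    _ ≤ ∑ i ∈ m.support, m i * d := sum_le_sum fun i _ ↦
        (totalDegree_pow _ _).trans (Nat.mul_le_mul_left _ (hf i))
    _ = (m.sum fun _ a ↦ a) * d := (sum_mul _ _ _).symm
    _ ≤ p.totalDegree * d := Nat.mul_le_mul_right d (le_totalDegree hm)

variable {R : Type*} [CommSemiring R] {n t : ℕ}

/-- Substitution of the constants `y` for the last `t` of `n + t` variables. -/
noncomputable def specializeLast (y : Fin t → R) :
    MvPolynomial (Fin (n + t)) R →ₐ[R] MvPolynomial (Fin n) R :=
  aeval (Fin.append X fun i ↦ C (y i))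

theorem eval_specializeLast (y : Fin t → R) (x : Fin n → R) (p : MvPolynomial (Fin (n + t)) R) :
    eval x (specializeLast y p) = eval (Fin.append x y) p := by
  simp only [specializeLast, ← coe_aeval_eq_eval, RingHom.coe_coe, ← AlgHom.comp_apply, comp_aeval]
  congr 2
  ext i
  induction i using Fin.addCases <;> simp

theorem totalDegree_specializeLast_le (y : Fin t → R) (p : MvPolynomial (Fin (n + t)) R) :
    (specializeLast y p).totalDegree ≤ p.totalDegree := by
  refine (totalDegree_aeval_le_s18 (d := 1) (fun i ↦ ?_) p).trans_eq (mul_one _)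
  induction i using Fin.addCases with
  | left i => simpa using (isHomogeneous_X R i).totalDegree_le
  | right i => simp

theorem specializeLast_psum (y : Fin t → R) (k : ℕ) :
    specializeLast y (psum (Fin (n + t)) R k) = psum (Fin n) R k + C (∑ i, y i ^ k) := by
  simp [specializeLast, psum, Fin.sum_univ_add]

end Specialization

section ValueSet

theorem exists_injective_eval_notMem {R : Type*} [CommRing R] [IsDomain R] {n k : ℕ}
    {A Y : Finset R} (hnA : n ≤ #A) (hdvd : k ∣ n ∨ k ∣ #A - n) (hY : #Y ≤ n * (#A - n) / k)
    (hfact : ((#Y)! : R) ≠ 0) {g : MvPolynomial (Fin n) R} (hg : g.totalDegree < k) :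
    ∃ x : Fin n → R, (∀ i, x i ∈ A) ∧ Injective x ∧ eval x (psum (Fin n) R k + g) ∉ Y := by
  classical
  obtain ⟨n', hn', e, he, hlt⟩ := exists_isAdmissible (pos_of_gt hg) hdvd hY
  obtain ⟨t, rfl⟩ := Nat.exists_eq_add_of_le hn'
  obtain ⟨y⟩ : Nonempty (Fin t ↪ A) := Embedding.nonempty_of_card_le <| by
    rw [Fintype.card_fin, Fintype.card_coe]
    omega
  let B : Finset R := univ.map (y.trans (Embedding.subtype _))
  have hBA : B ⊆ A := by
    intro b hb
    obtain ⟨i, -, rfl⟩ := mem_map.mp hb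
    exact (y i).2
  have hcard : #(A \ B) = n' + (#A - (n' + t)) := by
    rw [card_sdiff_of_subset hBA, card_map, card_fin]
    omega
  let h : MvPolynomial (Fin n') R := C (∑ i, (y i : R) ^ k) + specializeLast (fun i ↦ (y i : R)) g
  have hh : h.totalDegree < k := by
    refine (totalDegree_add _ _).trans_lt (max_lt ?_ ?_)
    · exact (totalDegree_C _).trans_lt (pos_of_gt hg)
    · exact (totalDegree_specializeLast_le _ g).trans_lt hg
  obtain ⟨x, hxA, hx, hxY⟩ := exists_injective_eval_notMem_of_isAdmissible (A := A \ B) he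
    (fun i ↦ (hlt i).trans_eq hcard.symm) hfact hh
  refine ⟨Fin.append x fun i ↦ (y i : R), fun i ↦ ?_, Fin.append_injective_iff.mpr ⟨hx, ?_, ?_⟩, ?_⟩
  · induction i using Fin.addCases with
    | left i => simpa using (mem_sdiff.mp (hxA i)).1
    | right i => simp
  · exact Subtype.val_injective.comp y.injective
  · intro i j hij
    exact (mem_sdiff.mp (hxA i)).2 (mem_map.mpr ⟨j, mem_univ j, hij.symm⟩)
  · rwa [← eval_specializeLast, map_add, specializeLast_psum, add_assoc]

theorem natCast_factorial_ne_zero_of_lt_ringChar {R : Type*} [NonAssocSemiring R] [Nontrivial R]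
    [NoZeroDivisors R] {T : ℕ}
    (hT : (T : ℕ∞) < if ringChar R = 0 then (⊤ : ℕ∞) else (ringChar R : ℕ∞)) :
    (T ! : R) ≠ 0 := by
  rw [Ne, ringChar.spec]
  rcases CharP.char_is_prime_or_zero R (ringChar R) with hp | hp
  · rw [if_neg hp.ne_zero, Nat.cast_lt] at hT
    rwa [hp.dvd_factorial, not_le]
  · rw [hp, zero_dvd_iff]
    exact T.factorial_ne_zero

end ValueSet

end

theorem stmt_18_general {R : Type*} [CommRing R] [IsDomain R] {n k : ℕ} {A : Finset R}
    (hnA : n ≤ A.card) (hdvd : k ∣ n ∨ k ∣ A.card - n) {g : MvPolynomial (Fin n) R}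
    (hg : g.totalDegree < k) :
    min (if ringChar R = 0 then (⊤ : ℕ∞) else (ringChar R : ℕ∞))
        ((n * (A.card - n) / k + 1 : ℕ)) ≤
      ({y : R | ∃ x : Fin n → R, (∀ i, x i ∈ A) ∧ Function.Injective x ∧
          eval x (psum (Fin n) R k + g) = y}.ncard : ℕ∞) := by
  set Y := {y : R | ∃ x : Fin n → R, (∀ i, x i ∈ A) ∧ Function.Injective x ∧
    eval x (psum (Fin n) R k + g) = y}
  have hY : Y.Finite := by
    refine ((Set.Finite.pi' fun _ : Fin n ↦ A.finite_toSet).image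
      fun x ↦ eval x (psum (Fin n) R k + g)).subset ?_
    rintro _ ⟨x, hxA, -, rfl⟩
    exact ⟨x, hxA, rfl⟩
  by_contra! hlt
  rw [Set.ncard_eq_toFinset_card Y hY, lt_min_iff, Nat.cast_lt, Nat.lt_succ_iff] at hlt
  obtain ⟨x, hxA, hx, hxY⟩ := exists_injective_eval_notMem hnA hdvd hlt.2
    (natCast_factorial_ne_zero_of_lt_ringChar hlt.1) hg
  exact hxY (hY.mem_toFinset.mpr ⟨x, hxA, hx, rfl⟩)

theorem stmt_18 {F : Type*} [Field F] (n k m : ℕ) (hn : 2 ≤ n)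
    (hk1 : 1 ≤ k) (hkn : k ≤ n) (hmn : n ≤ m)
    (hdvd : k ∣ n ∨ k ∣ (m - n))
    (A : Finset F) (hA : A.card = m)
    (g f : MvPolynomial (Fin n) F)
    (hf : f = (∑ i : Fin n, (X i : MvPolynomial (Fin n) F) ^ k) + g)
    (hg : g.totalDegree < k) :
    min (if ringChar F = 0 then (⊤ : ℕ∞) else (ringChar F : ℕ∞))
        ((n * (m - n) / k + 1 : ℕ)) ≤
      ({y : F | ∃ x : Fin n → F, (∀ i, x i ∈ A) ∧ Function.Injective x ∧
          MvPolynomial.eval x f = y}.ncard : ℕ∞) := by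
  subst hf hA
  exact stmt_18_general hmn hdvd hg
end
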